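/- Assume additionally θ_L > β_H·θ_H. Then the high-type utility at the optimal contract equals the information rent U_W(θ_H, I_H*, p_H*) = (θ_H − θ_L)·ln(η_2·(I_L* − I_r1)); in particular, the high-type IR constraint U_W(θ_H, I_H*, p_H*) ≥ 0 holds if and only if η_2·(I_L* − I_r1) ≥ 1. -/

import Mathlib

open Real

noncomputable def UW (η2 η3 Ir1 Ir2 θ I p : ℝ) : ℝ :=
  θ * Real.log (η2 * (I - Ir1)) + η3 * (I - Ir2) - p

noncomputable def priceL (θL η2 η3 Ir1 Ir2 IL : ℝ) : ℝ :=
  θL * Real.log (η2 * (IL - Ir1)) + η3 * (IL - Ir2)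

noncomputable def priceH (θL θH η2 η3 Ir1 Ir2 IL IH : ℝ) : ℝ :=
  priceL θL η2 η3 Ir1 Ir2 IL + θH * Real.log ((IH - Ir1) / (IL - Ir1)) + η3 * (IH - IL)

noncomputable def fobj (θL θH βL βH η1 η2 η3 Ir1 Ir2 ΔC IL IH : ℝ) : ℝ :=
  βL * (priceL θL η2 η3 Ir1 Ir2 IL - η1 * IL)
    + βH * (priceH θL θH η2 η3 Ir1 Ir2 IL IH - η1 * IH) + ΔC

noncomputable def ILstar (θL θH βL βH η1 η3 Ir1 : ℝ) : ℝ :=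
  Ir1 + (θL - βH * θH) / (βL * (η1 - η3))

noncomputable def IHstar (θH η1 η3 Ir1 : ℝ) : ℝ :=
  Ir1 + θH / (η1 - η3)

noncomputable def UE (βL βH η1 ΔC pLo IL pHi IH : ℝ) : ℝ :=
  βL * (pLo - η1 * IL) + βH * (pHi - η1 * IH) + ΔC

/-!
The low price extracts all the surplus of the low type, so a type `θ` buying the low contract keeps
exactly `(θ - θL) * log (η2 * (IL - Ir1))`. The high price is set so that the high type is
indifferent between the two contracts; hence this is also what the high type keeps when buying the
high contract, whatever the two performances are.
-/

section Contracts

variable {θL θH η2 Ir1 IL IH : ℝ}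

theorem UW_priceL (θ θL η2 η3 Ir1 Ir2 IL : ℝ) :
    UW η2 η3 Ir1 Ir2 θ IL (priceL θL η2 η3 Ir1 Ir2 IL) =
      (θ - θL) * log (η2 * (IL - Ir1)) := by
  unfold UW priceL
  ring

theorem UW_priceL_nonneg_iff {θ : ℝ} (η3 Ir2 : ℝ) (hθ : θL < θ) (hη2 : 0 < η2) (hIL : Ir1 < IL) :
    0 ≤ UW η2 η3 Ir1 Ir2 θ IL (priceL θL η2 η3 Ir1 Ir2 IL) ↔ 1 ≤ η2 * (IL - Ir1) := by
  rw [UW_priceL, mul_nonneg_iff_of_pos_left (sub_pos.mpr hθ),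
    log_nonneg_iff (mul_pos hη2 (sub_pos.mpr hIL))]

theorem UW_priceH_eq_UW_priceL (θL θH η3 Ir2 : ℝ)
    (hη2 : η2 ≠ 0) (hIL : IL ≠ Ir1) (hIH : IH ≠ Ir1) :
    UW η2 η3 Ir1 Ir2 θH IH (priceH θL θH η2 η3 Ir1 Ir2 IL IH) =
      UW η2 η3 Ir1 Ir2 θH IL (priceL θL η2 η3 Ir1 Ir2 IL) := by
  have hL : IL - Ir1 ≠ 0 := sub_ne_zero.mpr hIL
  have hH : IH - Ir1 ≠ 0 := sub_ne_zero.mpr hIH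
  have log_gain : log (η2 * (IH - Ir1)) =
      log (η2 * (IL - Ir1)) + log ((IH - Ir1) / (IL - Ir1)) := by
    rw [log_mul hη2 hH, log_mul hη2 hL, log_div hH hL]
    ring
  unfold UW priceH
  rw [log_gain]
  ring

theorem stmt_10_general {η3 Ir2 : ℝ} (hθ : θL < θH) (hη2 : 0 < η2)
    (hIL : Ir1 < IL) (hIH : Ir1 < IH) :
    UW η2 η3 Ir1 Ir2 θH IH (priceH θL θH η2 η3 Ir1 Ir2 IL IH) =
      (θH - θL) * log (η2 * (IL - Ir1)) ∧
    (0 ≤ UW η2 η3 Ir1 Ir2 θH IH (priceH θL θH η2 η3 Ir1 Ir2 IL IH) ↔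
      1 ≤ η2 * (IL - Ir1)) := by
  rw [UW_priceH_eq_UW_priceL θL θH η3 Ir2 hη2.ne' hIL.ne' hIH.ne']
  exact ⟨UW_priceL θH θL η2 η3 Ir1 Ir2 IL, UW_priceL_nonneg_iff η3 Ir2 hθ hη2 hIL⟩

end Contracts

section OptimalPerformances

variable {θL θH βL βH η1 η3 Ir1 : ℝ}

theorem lt_ILstar (hmono : βH * θH < θL) (hβL : 0 < βL) (hη : η3 < η1) :
    Ir1 < ILstar θL θH βL βH η1 η3 Ir1 :=
  lt_add_of_pos_right Ir1 (div_pos (sub_pos.mpr hmono) (mul_pos hβL (sub_pos.mpr hη)))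

theorem lt_IHstar (hθH : 0 < θH) (hη : η3 < η1) : Ir1 < IHstar θH η1 η3 Ir1 :=
  lt_add_of_pos_right Ir1 (div_pos hθH (sub_pos.mpr hη))

end OptimalPerformances

theorem stmt_10
    (θL θH βL βH η1 η2 η3 Ir1 Ir2 ΔC : ℝ)
    (hθL : 0 < θL) (hθ : θL < θH)
    (hβL0 : 0 < βL) (hβL1 : βL < 1)
    (hβH0 : 0 < βH) (hβH1 : βH < 1)
    (hβ : βL + βH = 1)
    (hη3 : 0 < η3) (hη13 : η3 < η1) (hη2 : 0 < η2)
    (hIr : Ir1 < Ir2)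
    (hmono : βH * θH < θL) :
    UW η2 η3 Ir1 Ir2 θH (IHstar θH η1 η3 Ir1) (priceH θL θH η2 η3 Ir1 Ir2 (ILstar θL θH βL βH η1 η3 Ir1) (IHstar θH η1 η3 Ir1)) =
      (θH - θL) * Real.log (η2 * ((ILstar θL θH βL βH η1 η3 Ir1) - Ir1)) ∧
    (0 ≤ UW η2 η3 Ir1 Ir2 θH (IHstar θH η1 η3 Ir1) (priceH θL θH η2 η3 Ir1 Ir2 (ILstar θL θH βL βH η1 η3 Ir1) (IHstar θH η1 η3 Ir1)) ↔ 1 ≤ η2 * ((ILstar θL θH βL βH η1 η3 Ir1) - Ir1)) := by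
  exact stmt_10_general hθ hη2 (lt_ILstar hmono hβL0 hη13) (lt_IHstar (hθL.trans hθ) hη13)
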